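/- Let X be a metric space with a Busemann midpoint map m, let B ⊆ X be a nonempty compact set with diameter D := diam(B), and let B* := { m(x,y) : x, y ∈ B, dist(x,y) = D } be the set of midpoints of pairs of points of B realizing the diameter. If diam(B*) = D, then there exist points x₁, x₂, x₃, x₄ ∈ B such that dist(x_i, x_j) = D for all i ≠ j. -/

import Mathlib

open Filter MeasureTheory Metric Topology
open scoped Pointwise symmDiff ENNReal

/-- A Busemann midpoint map on a metric space. -/
structure BusemannMidpoint (X : Type*) [MetricSpace X] where
  mid : X → X → X
  dist_left : ∀ x y, dist x (mid x y) = dist x y / 2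
  dist_right : ∀ x y, dist (mid x y) y = dist x y / 2
  convex : ∀ x y x' y', dist (mid x y) (mid x' y') ≤ (dist x x' + dist y y') / 2

/-- A barycenter family on a metric space with a Busemann midpoint map. -/
structure BarycenterFamily (X : Type*) [MetricSpace X] (M : BusemannMidpoint X) where
  b : (n : ℕ) → (Fin n → X) → X
  b_one : ∀ x : Fin 1 → X, b 1 x = x 0
  b_two : ∀ x : Fin 2 → X, b 2 x = M.mid (x 0) (x 1)
  perm_invariant : ∀ (n : ℕ) (σ : Equiv.Perm (Fin n)) (x : Fin n → X), b n (x ∘ σ) = b n x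
  lipschitz : ∀ (n : ℕ) (x y : Fin n → X),
    dist (b n x) (b n y) ≤ (1 / n : ℝ) * ∑ i, dist (x i) (y i)
  recur : ∀ (n : ℕ), 1 ≤ n → ∀ x : Fin (n + 1) → X,
    b (n + 1) x = b (n + 1) (fun i => b n (x ∘ i.succAbove))

/-- The `k`-fold repetition of a tuple. -/
def repTuple {X : Type*} {n : ℕ} (Q : Fin n → X) (k : ℕ) : Fin (n * k) → X :=
  fun i => Q ⟨i.val % n, Nat.mod_lt _ (by
    rcases Nat.eq_zero_or_pos n with h | h
    · exact absurd i.isLt (by simp [h])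
    · exact h)⟩

/-- The set of midpoints of pairs of points of A realizing the diameter of A. -/
def midStar {X : Type*} [MetricSpace X] (M : BusemannMidpoint X) (A : Set X) : Set X :=
  {z | ∃ x ∈ A, ∃ y ∈ A, dist x y = Metric.diam A ∧ z = M.mid x y}

/-!
Convexity bounds the distance between the midpoints of `x, y` and of `z, w` by the average of the
four distances from `{x, y}` to `{z, w}`. Compactness provides two points of `midStar M B` at
distance `D = diam B`, so that average is at least `D`. As none of the four distances exceeds `D`,
all of them equal `D`; the remaining two pairs `x, y` and `z, w` realize `D` by the choice of the
midpoints.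
-/

lemma exists_dist_eq_diam_of_isCompact {α : Type*} [PseudoMetricSpace α] {s : Set α}
    (hs : IsCompact s) (hne : s.Nonempty) : ∃ x ∈ s, ∃ y ∈ s, dist x y = diam s := by
  obtain ⟨⟨x, y⟩, ⟨hx, hy⟩, hmax⟩ :=
    (hs.prod hs).exists_isMaxOn (hne.prod hne) continuous_dist.continuousOn
  have diam_le_dist : diam s ≤ dist x y :=
    diam_le_of_forall_dist_le dist_nonneg fun a ha b hb => hmax (a := (a, b)) ⟨ha, hb⟩
  exact ⟨x, hx, y, hy, (dist_le_diam_of_mem hs.isBounded hx hy).antisymm diam_le_dist⟩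

section

variable {X : Type*} [MetricSpace X] (M : BusemannMidpoint X)

namespace BusemannMidpoint

lemma mid_self (x : X) : M.mid x x = x := by
  have h : dist x (M.mid x x) = 0 := by rw [M.dist_left, dist_self, zero_div]
  exact (dist_eq_zero.mp h).symm

lemma dist_mid_left_le (x y z : X) : dist (M.mid x y) z ≤ (dist x z + dist y z) / 2 := by
  simpa only [M.mid_self] using M.convex x y z z

lemma dist_mid_right_le (x y z : X) : dist x (M.mid y z) ≤ (dist x y + dist x z) / 2 := by
  simpa only [M.mid_self] using M.convex x x y z

lemma dist_mid_mid_le (x y z w : X) :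
    dist (M.mid x y) (M.mid z w) ≤ (dist x z + dist x w + dist y z + dist y w) / 4 :=
  calc dist (M.mid x y) (M.mid z w)
      ≤ (dist x (M.mid z w) + dist y (M.mid z w)) / 2 := M.dist_mid_left_le ..
    _ ≤ ((dist x z + dist x w) / 2 + (dist y z + dist y w) / 2) / 2 := by
        gcongr <;> exact M.dist_mid_right_le ..
    _ = (dist x z + dist x w + dist y z + dist y w) / 4 := by ring

lemma dist_eq_of_le_dist_mid_mid {x y z w : X} {D : ℝ} (hxz : dist x z ≤ D) (hxw : dist x w ≤ D)
    (hyz : dist y z ≤ D) (hyw : dist y w ≤ D) (hD : D ≤ dist (M.mid x y) (M.mid z w)) :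
    dist x z = D ∧ dist x w = D ∧ dist y z = D ∧ dist y w = D := by
  have le_average := hD.trans (M.dist_mid_mid_le x y z w)
  refine ⟨?_, ?_, ?_, ?_⟩ <;> linarith

lemma lipschitzWith_mid : LipschitzWith 1 fun p : X × X => M.mid p.1 p.2 :=
  LipschitzWith.mk_one fun p q =>
    calc dist (M.mid p.1 p.2) (M.mid q.1 q.2)
        ≤ (dist p.1 q.1 + dist p.2 q.2) / 2 := M.convex ..
      _ ≤ (dist p q + dist p q) / 2 := by
          gcongr
          exacts [le_max_left _ _, le_max_right _ _]
      _ = dist p q := add_self_div_two _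

end BusemannMidpoint

lemma midStar_eq_image (A : Set X) :
    midStar M A = (fun p : X × X => M.mid p.1 p.2) '' (A ×ˢ A ∩ {p | dist p.1 p.2 = diam A}) := by
  ext z
  constructor
  · rintro ⟨x, hx, y, hy, hxy, rfl⟩
    exact ⟨(x, y), ⟨⟨hx, hy⟩, hxy⟩, rfl⟩
  · rintro ⟨⟨x, y⟩, ⟨⟨hx, hy⟩, hxy⟩, rfl⟩
    exact ⟨x, hx, y, hy, hxy, rfl⟩

lemma isCompact_midStar {A : Set X} (hA : IsCompact A) : IsCompact (midStar M A) := by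
  rw [midStar_eq_image]
  exact ((hA.prod hA).inter_right (isClosed_eq continuous_dist continuous_const)).image
    M.lipschitzWith_mid.continuous

lemma midStar_nonempty {A : Set X} (hA : IsCompact A) (hne : A.Nonempty) :
    (midStar M A).Nonempty := by
  obtain ⟨x, hx, y, hy, hxy⟩ := exists_dist_eq_diam_of_isCompact hA hne
  exact ⟨M.mid x y, x, hx, y, hy, hxy, rfl⟩

end

/-- if the set of diameter-realizing midpoints of a nonempty
compact set B has the same diameter D as B, then B contains four points with
pairwise distances all equal to D. -/
theorem four_points_of_diam_midStar_eq {X : Type*} [MetricSpace X]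
    (M : BusemannMidpoint X) (B : Set X) (hBne : B.Nonempty) (hBcpt : IsCompact B)
    (hstar : Metric.diam (midStar M B) = Metric.diam B) :
    ∃ x₁ ∈ B, ∃ x₂ ∈ B, ∃ x₃ ∈ B, ∃ x₄ ∈ B,
      dist x₁ x₂ = Metric.diam B ∧ dist x₁ x₃ = Metric.diam B ∧
      dist x₁ x₄ = Metric.diam B ∧ dist x₂ x₃ = Metric.diam B ∧
      dist x₂ x₄ = Metric.diam B ∧ dist x₃ x₄ = Metric.diam B := by
  obtain ⟨_, ⟨x, hx, y, hy, hxy, rfl⟩, _, ⟨z, hz, w, hw, hzw, rfl⟩, hmid⟩ :=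
    exists_dist_eq_diam_of_isCompact (isCompact_midStar M hBcpt) (midStar_nonempty M hBcpt hBne)
  have dist_le {p q : X} (hp : p ∈ B) (hq : q ∈ B) : dist p q ≤ diam B :=
    dist_le_diam_of_mem hBcpt.isBounded hp hq
  obtain ⟨hxz, hxw, hyz, hyw⟩ := M.dist_eq_of_le_dist_mid_mid (dist_le hx hz) (dist_le hx hw)
    (dist_le hy hz) (dist_le hy hw) (hmid.trans hstar).ge
  exact ⟨x, hx, y, hy, z, hz, w, hw, hxy, hxz, hxw, hyz, hyw, hzw⟩
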